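/- arXiv:1207.3831 — 3 statements merged into one kernel-verified Lean document; each statement's English description precedes it below -/
import Mathlib

section
/- Let K₁ = {V ∈ H_d : V is positive semidefinite and rank(V) = 1}. There exists a Borel measurable map g : K₁ → ℂ^d∖{0} such that g(V)·g(V)* = V for every V ∈ K₁. Moreover, for every Borel measure ν on K₁ with ∫ min(1, tr(V)) ν(dV) < ∞, the pushforward measure μ = ν ∘ g^{-1} on ℂ^d satisfies ∫ min(1, ‖x‖²) μ(dx) = ∫ min(1, tr(V)) ν(dV) < ∞. -/
open MeasureTheory Matrix
open scoped ComplexOrder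

noncomputable section

/-- Borel (product) σ-algebra on complex matrices. -/
instance matrixMeasurableSpace {d q : ℕ} : MeasurableSpace (Matrix (Fin d) (Fin q) ℂ) :=
  inferInstanceAs (MeasurableSpace (Fin d → Fin q → ℂ))

/-- The outer product `xy*` of two complex column vectors. -/
def outer {d : ℕ} (x y : Fin d → ℂ) : Matrix (Fin d) (Fin d) ℂ :=
  Matrix.vecMulVec x (star y)

/-- Euclidean norm squared of a complex vector. -/
def cnormSq {d : ℕ} (x : Fin d → ℂ) : ℝ := ∑ i, Complex.normSq (x i)

/-- The cone of rank-one positive semidefinite Hermitian `d×d` matrices. -/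
def K1 (d : ℕ) : Set (Matrix (Fin d) (Fin d) ℂ) :=
  {V | V.PosSemidef ∧ V.rank = 1}

/-- Normalized column at the first index of the list with nonzero diagonal entry. -/
def selAux {d : ℕ} : List (Fin d) → Matrix (Fin d) (Fin d) ℂ → (Fin d → ℂ)
  | [], _ => 0
  | i :: l, V => if V i i = 0 then selAux l V else fun j => V j i / (Real.sqrt (V i i).re : ℂ)

lemma measurable_entry {d : ℕ} (i j : Fin d) :
    Measurable (fun V : Matrix (Fin d) (Fin d) ℂ => V i j) := by
  have h : Measurable (fun V : Fin d → Fin d → ℂ => V i j) := by fun_prop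
  exact h

lemma measurable_selAux {d : ℕ} (l : List (Fin d)) : Measurable (selAux l) := by
  induction l with
  | nil => exact measurable_const
  | cons i l ih =>
    change Measurable (fun V : Matrix (Fin d) (Fin d) ℂ => if V i i = 0 then selAux l V
      else fun j => V j i / (Real.sqrt (V i i).re : ℂ))
    refine Measurable.ite ?_ ih ?_
    · exact measurable_entry i i (measurableSet_singleton 0)
    · refine measurable_pi_lambda _ fun j => ?_
      refine (measurable_entry j i).div ?_
      exact Complex.measurable_ofReal.comp
        ((Complex.measurable_re.comp (measurable_entry i i)).sqrt)

lemma selAux_spec {d : ℕ} (l : List (Fin d)) (V : Matrix (Fin d) (Fin d) ℂ)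
    (h : ∃ i ∈ l, V i i ≠ 0) :
    ∃ i, V i i ≠ 0 ∧ selAux l V = fun j => V j i / (Real.sqrt (V i i).re : ℂ) := by
  induction l with
  | nil => simp at h
  | cons i l ih =>
    by_cases hi : V i i = 0
    · obtain ⟨k, hk, hk0⟩ := h
      have hkl : k ∈ l := by
        rcases List.mem_cons.1 hk with rfl | hk
        · exact absurd hi hk0
        · exact hk
      obtain ⟨m, hm, e⟩ := ih ⟨k, hkl, hk0⟩
      exact ⟨m, hm, by rw [selAux, if_pos hi, e]⟩
    · exact ⟨i, hi, by rw [selAux, if_neg hi]⟩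

lemma rank_one_minor {d : ℕ} (V : Matrix (Fin d) (Fin d) ℂ) (h : V.rank = 1) (i j k : Fin d) :
    V j k * V i i = V j i * V i k := by
  rw [Matrix.rank, finrank_eq_one_iff'] at h
  obtain ⟨v, -, hv⟩ := h
  have hc : ∀ k, ∃ c : ℂ, ∀ j, V j k = c * v.1 j := by
    intro k
    obtain ⟨c, hc⟩ := hv ⟨V.mulVecLin (Pi.single k 1), LinearMap.mem_range_self _ _⟩
    refine ⟨c, fun j => ?_⟩
    have := congrFun (congrArg Subtype.val hc) j
    simp at this
    exact this.symm
  obtain ⟨a, ha⟩ := hc i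
  obtain ⟨b, hb⟩ := hc k
  rw [ha, ha, hb, hb]; ring

lemma selAux_outer {d : ℕ} (V : Matrix (Fin d) (Fin d) ℂ) (hV : V ∈ K1 d) :
    outer (selAux (List.finRange d) V) (selAux (List.finRange d) V) = V := by
  obtain ⟨hp, hr⟩ := hV
  have hne : V ≠ 0 := by rintro rfl; simp at hr
  have hex : ∃ i ∈ List.finRange d, V i i ≠ 0 := by
    by_contra! hcon
    apply hne
    rw [← hp.trace_eq_zero_iff]
    exact Finset.sum_eq_zero fun i _ => hcon i (List.mem_finRange i)
  obtain ⟨i, hi, e⟩ := selAux_spec _ V hex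
  rw [e]
  have h0 : 0 ≤ V i i := hp.diag_nonneg
  have hre := (Complex.nonneg_iff.1 h0).1
  have him : ((V i i).re : ℂ) = V i i :=
    Complex.ext (by simp) (by simpa using (Complex.nonneg_iff.1 h0).2)
  have hs : (Real.sqrt (V i i).re : ℂ) * (Real.sqrt (V i i).re : ℂ) = V i i := by
    rw [← Complex.ofReal_mul, Real.mul_self_sqrt hre, him]
  ext j k
  simp only [outer, Matrix.vecMulVec_apply, Pi.star_apply, star_div₀, hp.1.apply]
  have : star (Real.sqrt (V i i).re : ℂ) = (Real.sqrt (V i i).re : ℂ) := Complex.conj_ofReal _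
  rw [this, div_mul_div_comm, hs, ← rank_one_minor V hr, mul_div_cancel_right₀ _ hi]

lemma cnormSq_eq {d : ℕ} (x : Fin d → ℂ) : cnormSq x = (outer x x).trace.re := by
  simp [cnormSq, outer, Matrix.trace, Matrix.vecMulVec_apply, Complex.mul_conj, Complex.normSq_apply]

lemma measurable_cnormSq {d : ℕ} : Measurable (cnormSq (d := d)) := by
  unfold cnormSq
  refine Finset.measurable_sum _ fun i _ => ?_
  exact Complex.continuous_normSq.measurable.comp (measurable_pi_apply i)

/-- There is a Borel measurable selection `g` with `g(V)g(V)* = V` on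
the rank-one positive semidefinite matrices, and for every measure `ν` on `K₁` with
`∫ min(1, tr V) ν(dV) < ∞` the pushforward `μ = ν ∘ g⁻¹` satisfies
`∫ min(1,‖x‖²) μ(dx) = ∫ min(1, tr V) ν(dV) < ∞`. -/
theorem measurable_selection_of_rank_one_psd
    (d : ℕ) :
    ∃ g : Matrix (Fin d) (Fin d) ℂ → (Fin d → ℂ),
      Measurable g ∧
      (∀ V ∈ K1 d, g V ≠ 0 ∧ outer (g V) (g V) = V) ∧
      ∀ ν : Measure (Matrix (Fin d) (Fin d) ℂ), ν (K1 d)ᶜ = 0 →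
        (∫⁻ V, ENNReal.ofReal (min 1 (V.trace.re)) ∂ν < ⊤) →
        (∫⁻ x, ENNReal.ofReal (min 1 (cnormSq x)) ∂(ν.map g) =
          ∫⁻ V, ENNReal.ofReal (min 1 (V.trace.re)) ∂ν) ∧
        (∫⁻ x, ENNReal.ofReal (min 1 (cnormSq x)) ∂(ν.map g) < ⊤) := by
  refine ⟨selAux (List.finRange d), measurable_selAux _, fun V hV => ⟨?_, selAux_outer V hV⟩, ?_⟩
  · intro h0
    have h := selAux_outer V hV
    rw [h0] at h
    have : V = 0 := by rw [← h]; ext; simp [outer, Matrix.vecMulVec_apply]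
    have hr := hV.2
    rw [this] at hr
    simp at hr
  · intro ν hν hfin
    have key : ∫⁻ x, ENNReal.ofReal (min 1 (cnormSq x)) ∂(ν.map (selAux (List.finRange d))) =
          ∫⁻ V, ENNReal.ofReal (min 1 (V.trace.re)) ∂ν := by
      rw [lintegral_map (measurable_const.min measurable_cnormSq).ennreal_ofReal
        (measurable_selAux _)]
      refine lintegral_congr_ae ?_
      have hae : ∀ᵐ V ∂ν, V ∈ K1 d := hν
      filter_upwards [hae] with V hV
      rw [cnormSq_eq, selAux_outer V hV]
    exact ⟨key, key ▸ hfin⟩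
end
end

section
/- Let d ≥ 1 and let u be a random vector uniformly distributed on the unit sphere of ℂ^d (law σ_d). Then for every d×d complex Hermitian matrix Θ, the quadratic form u*Θu is real and E[(u*Θu)²] = (tr(Θ²) + (tr(Θ))²) / (d(d+1)). Equivalently, d·E[|tr(Θ·uu*)|²] = (tr(Θ²) + (tr(Θ))²)/(d+1). -/
open MeasureTheory Matrix
open scoped ComplexOrder

noncomputable section

/-- The unit sphere `{x ∈ ℂ^d : ‖x‖ = 1}`. -/
def unitSphere (d : ℕ) : Set (Fin d → ℂ) := {x | cnormSq x = 1}

/-- `σ` is the uniform (rotation-invariant) probability measure `σ_d` on the unit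
sphere of `ℂ^d`. -/
def IsUniformSphereMeasure (d : ℕ) (σ : Measure (Fin d → ℂ)) : Prop :=
  IsProbabilityMeasure σ ∧ σ (unitSphere d)ᶜ = 0 ∧
  ∀ U : Matrix.unitaryGroup (Fin d) ℂ,
    σ.map (fun x => Matrix.mulVec (U : Matrix (Fin d) (Fin d) ℂ) x) = σ


lemma sm_integral_comp {d : ℕ} {σ : Measure (Fin d → ℂ)} (hσ : IsUniformSphereMeasure d σ)
    (U : Matrix (Fin d) (Fin d) ℂ) (hU : U ∈ Matrix.unitaryGroup (Fin d) ℂ)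
    (f : (Fin d → ℂ) → ℝ) (hf : Continuous f) :
    ∫ x, f (U.mulVec x) ∂σ = ∫ x, f x ∂σ := by
  have h := hσ.2.2 ⟨U, hU⟩
  have hm : Continuous (fun x : Fin d → ℂ => U.mulVec x) := by fun_prop
  conv_rhs => rw [← h]
  rw [integral_map hm.aemeasurable hf.aestronglyMeasurable]

lemma sm_unitary {d : ℕ} (P : Matrix (Fin d) (Fin d) ℂ) (h1 : P * P = P) (h2 : Pᴴ = P)
    (c : ℂ) (hc : c * star c = 1) : 1 + (c - 1) • P ∈ Matrix.unitaryGroup (Fin d) ℂ := by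
  rw [Matrix.mem_unitaryGroup_iff, Matrix.star_eq_conjTranspose]
  rw [Matrix.conjTranspose_add, Matrix.conjTranspose_smul, h2, Matrix.conjTranspose_one]
  simp only [add_mul, mul_add, one_mul, mul_one, smul_mul_assoc, mul_smul_comm, h1]
  have : (c - 1) + star (c - 1) + star (c - 1) * (c - 1) = 0 := by
    rw [star_sub, star_one]; linear_combination hc
  calc 1 + (c - 1) • P + star (c - 1) • (P + (c - 1) • P)
      = 1 + ((c - 1) + star (c - 1) + star (c - 1) * (c - 1)) • P := by module
    _ = 1 := by rw [this]; simp

lemma sm_rot {d : ℕ} {σ : Measure (Fin d → ℂ)} (hσ : IsUniformSphereMeasure d σ)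
    (i j : Fin d) (hij : i ≠ j) (w c : ℂ) (hw : w * star w = 1) (hc : c * star c = 1)
    (g : ℂ → ℂ → ℝ) (hg : Continuous (fun p : ℂ × ℂ => g p.1 p.2)) :
    ∫ x, g (x i + (c - 1) / 2 * (x i + star w * x j)) (x j + (c - 1) / 2 * (w * x i + x j)) ∂σ
      = ∫ x, g (x i) (x j) ∂σ := by
  set P : Matrix (Fin d) (Fin d) ℂ := (1 / 2 : ℂ) • (Matrix.single i i 1 + Matrix.single j j 1
    + Matrix.single i j (star w) + Matrix.single j i w) with hP
  have h1 : P * P = P := by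
    have hw' : star w * w = 1 := by rw [mul_comm]; exact hw
    simp only [hP, smul_mul_assoc, mul_smul_comm, add_mul, mul_add, Matrix.single_mul_single_same,
      Matrix.single_mul_single_of_ne _ _ _ _ hij, Matrix.single_mul_single_of_ne _ _ _ _ hij.symm,
      hw, hw', one_mul, mul_one, add_zero, zero_add]
    module
  have h2 : Pᴴ = P := by
    simp only [hP, Matrix.conjTranspose_smul, Matrix.conjTranspose_add,
      Matrix.conjTranspose_single, star_star, star_one]
    have : star (1 / 2 : ℂ) = 1 / 2 := by simp
    rw [this]
    congr 1
    abel
  have := sm_integral_comp hσ _ (sm_unitary P h1 h2 c hc) (fun x => g (x i) (x j))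
    (hg.comp (by fun_prop : Continuous fun x : Fin d → ℂ => (x i, x j)))
  rw [← this]
  congr 1
  ext x
  simp only [Matrix.add_mulVec, Matrix.one_mulVec, Matrix.smul_mulVec, hP, Pi.add_apply,
    Pi.smul_apply, Matrix.single_mulVec, smul_eq_mul, Function.update_apply, Pi.zero_apply, hij,
    hij.symm, if_true, if_false]
  congr 1 <;> ring

lemma sm_ae {d : ℕ} {σ : Measure (Fin d → ℂ)} (hσ : IsUniformSphereMeasure d σ) :
    ∀ᵐ x ∂σ, ∑ i, Complex.normSq (x i) = 1 := by
  rw [ae_iff]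
  exact hσ.2.1

lemma sm_integrable {d : ℕ} {σ : Measure (Fin d → ℂ)} (hσ : IsUniformSphereMeasure d σ)
    (i j : Fin d) : Integrable (fun x => Complex.normSq (x i) * Complex.normSq (x j)) σ := by
  have := hσ.1
  have hc : Continuous (fun x : Fin d → ℂ => Complex.normSq (x i) * Complex.normSq (x j)) :=
    (Complex.continuous_normSq.comp (continuous_apply i)).mul
      (Complex.continuous_normSq.comp (continuous_apply j))
  refine Integrable.of_bound hc.aestronglyMeasurable 1 ?_
  filter_upwards [sm_ae hσ] with x hx
  have hle : ∀ k, Complex.normSq (x k) ≤ 1 := fun k => by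
    rw [← hx]
    exact Finset.single_le_sum (f := fun k => Complex.normSq (x k))
      (fun _ _ => Complex.normSq_nonneg _) (Finset.mem_univ k)
  rw [Real.norm_of_nonneg (mul_nonneg (Complex.normSq_nonneg _) (Complex.normSq_nonneg _))]
  exact mul_le_one₀ (hle i) (Complex.normSq_nonneg _) (hle j)

lemma sm_diag_eq {d : ℕ} {σ : Measure (Fin d → ℂ)} (hσ : IsUniformSphereMeasure d σ)
    (i j : Fin d) : ∫ x, Complex.normSq (x i) * Complex.normSq (x i) ∂σ
      = ∫ x, Complex.normSq (x j) * Complex.normSq (x j) ∂σ := by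
  by_cases hij : i = j
  · rw [hij]
  have := sm_rot hσ i j hij (-1) (-1) (by simp) (by simp)
    (fun a _ => Complex.normSq a * Complex.normSq a)
    (by have := Complex.continuous_normSq; fun_prop)
  rw [← this]
  congr 1
  ext x
  have : x i + (-1 - 1) / 2 * (x i + star (-1) * x j) = x j := by simp; ring
  rw [this]

lemma sm_off {d : ℕ} {σ : Measure (Fin d → ℂ)} (hσ : IsUniformSphereMeasure d σ)
    (i j : Fin d) (hij : i ≠ j) : ∫ x, Complex.normSq (x i) * Complex.normSq (x j) ∂σ
      = (∫ x, Complex.normSq (x i) * Complex.normSq (x i) ∂σ) / 2 := by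
  have hcont : Continuous (fun p : ℂ × ℂ => Complex.normSq p.1 * Complex.normSq p.2) := by
    have := Complex.continuous_normSq; fun_prop
  have e1 := sm_rot hσ i j hij (-1) Complex.I (by simp) (by simp)
    (fun a b => Complex.normSq a * Complex.normSq b) hcont
  have e2 := sm_rot hσ i j hij Complex.I Complex.I (by simp) (by simp)
    (fun a b => Complex.normSq a * Complex.normSq b) hcont
  have hd := sm_diag_eq hσ i j
  have hint : ∀ w : ℂ, w * star w = 1 → Integrable (fun x : Fin d → ℂ =>
      Complex.normSq (x i + (Complex.I - 1) / 2 * (x i + star w * x j)) *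
      Complex.normSq (x j + (Complex.I - 1) / 2 * (w * x i + x j))) σ := by
    intro w hw
    have hc : Continuous (fun x : Fin d → ℂ =>
      Complex.normSq (x i + (Complex.I - 1) / 2 * (x i + star w * x j)) *
      Complex.normSq (x j + (Complex.I - 1) / 2 * (w * x i + x j))) := by
      have := Complex.continuous_normSq; fun_prop
    refine Integrable.mono' (((sm_integrable hσ i i).add (sm_integrable hσ j j)).add
      ((sm_integrable hσ i j).const_mul 2)) hc.aestronglyMeasurable ?_
    filter_upwards with x
    rw [Real.norm_of_nonneg (mul_nonneg (Complex.normSq_nonneg _) (Complex.normSq_nonneg _))]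
    have hs : Complex.normSq (x i + (Complex.I - 1) / 2 * (x i + star w * x j)) +
      Complex.normSq (x j + (Complex.I - 1) / 2 * (w * x i + x j)) =
        Complex.normSq (x i) + Complex.normSq (x j) := by
      have hw2 : w.re * w.re + w.im * w.im = 1 := by
        have := congrArg Complex.re hw
        simpa using this
      generalize x i = a
      generalize x j = b
      simp [Complex.normSq_apply]
      linear_combination ((a.re ^ 2 + a.im ^ 2 + b.re^2 + b.im^2) / 2) * hw2
    have p1 := Complex.normSq_nonneg (x i + (Complex.I - 1) / 2 * (x i + star w * x j))
    have p2 := Complex.normSq_nonneg (x j + (Complex.I - 1) / 2 * (w * x i + x j))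
    simp only [Pi.add_apply]
    nlinarith
  have hsum : ∀ x : Fin d → ℂ,
      Complex.normSq (x i + (Complex.I - 1) / 2 * (x i + star (-1) * x j)) *
      Complex.normSq (x j + (Complex.I - 1) / 2 * (-1 * x i + x j)) +
      Complex.normSq (x i + (Complex.I - 1) / 2 * (x i + star Complex.I * x j)) *
      Complex.normSq (x j + (Complex.I - 1) / 2 * (Complex.I * x i + x j)) =
      (1 / 2) * (Complex.normSq (x i) * Complex.normSq (x i)) +
      (1 / 2) * (Complex.normSq (x j) * Complex.normSq (x j)) := by
    intro x
    generalize x i = a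
    generalize x j = b
    simp [Complex.normSq_apply]
    ring
  have h3 := integral_add (hint (-1) (by simp)) (hint Complex.I (by simp))
  rw [e1, e2] at h3
  simp only [hsum] at h3
  rw [integral_add ((sm_integrable hσ i i).const_mul _) ((sm_integrable hσ j j).const_mul _),
    integral_const_mul, integral_const_mul, ← hd] at h3
  linarith

lemma sm_sum {d : ℕ} {σ : Measure (Fin d → ℂ)} (hσ : IsUniformSphereMeasure d σ)
    (l : Fin d → ℝ) : ∫ x, (∑ i, l i * Complex.normSq (x i)) ^ 2 ∂σ =
      ∑ i, ∑ j, l i * l j * ∫ x, Complex.normSq (x i) * Complex.normSq (x j) ∂σ := by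
  have : ∀ x : Fin d → ℂ, (∑ i, l i * Complex.normSq (x i)) ^ 2 =
      ∑ i, ∑ j, l i * l j * (Complex.normSq (x i) * Complex.normSq (x j)) := by
    intro x
    rw [sq, Finset.sum_mul_sum]
    refine Finset.sum_congr rfl fun i _ => Finset.sum_congr rfl fun j _ => by ring
  simp only [this]
  rw [integral_finsetSum _ fun i _ => integrable_finsetSum _ fun j _ =>
    (sm_integrable hσ i j).const_mul _]
  refine Finset.sum_congr rfl fun i _ => ?_
  rw [integral_finsetSum _ fun j _ => (sm_integrable hσ i j).const_mul _]
  refine Finset.sum_congr rfl fun j _ => ?_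
  rw [integral_const_mul]

lemma sm_sum2 {d : ℕ} {σ : Measure (Fin d → ℂ)} (hσ : IsUniformSphereMeasure d σ) (hd : 1 ≤ d)
    (l : Fin d → ℝ) : ∫ x, (∑ i, l i * Complex.normSq (x i)) ^ 2 ∂σ =
      (∑ i, l i ^ 2 + (∑ i, l i) ^ 2) / (d * (d + 1)) := by
  have := hσ.1
  set a := ∫ x, Complex.normSq (x ⟨0, hd⟩) * Complex.normSq (x ⟨0, hd⟩) ∂σ with ha
  have hm : ∀ i j, ∫ x, Complex.normSq (x i) * Complex.normSq (x j) ∂σ =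
      a / 2 + if i = j then a / 2 else 0 := by
    intro i j
    by_cases h : i = j
    · subst h
      rw [if_pos rfl, sm_diag_eq hσ i ⟨0, hd⟩, ← ha]; ring
    · rw [if_neg h, sm_off hσ i j h, sm_diag_eq hσ i ⟨0, hd⟩, ← ha]; ring
  have hgen : ∀ l : Fin d → ℝ, ∫ x, (∑ i, l i * Complex.normSq (x i)) ^ 2 ∂σ =
      (∑ i, l i ^ 2 + (∑ i, l i) ^ 2) * (a / 2) := by
    intro l
    rw [sm_sum hσ]
    simp only [hm, mul_add, Finset.sum_add_distrib, mul_ite, mul_zero, Finset.sum_ite_eq,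
      Finset.mem_univ, if_true]
    rw [add_mul, sq (∑ i, l i), Finset.sum_mul_sum, Finset.sum_mul, Finset.sum_mul, add_comm]
    congr 1
    · exact Finset.sum_congr rfl fun i _ => by ring
    · exact Finset.sum_congr rfl fun i _ => by rw [Finset.sum_mul]
  have h1 := hgen (fun _ => 1)
  have h2 : ∫ x, (∑ i, (1 : ℝ) * Complex.normSq (x i)) ^ 2 ∂σ = 1 := by
    have : (fun x : Fin d → ℂ => (∑ i, (1 : ℝ) * Complex.normSq (x i)) ^ 2) =ᵐ[σ]
        fun _ => (1 : ℝ) := by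
      filter_upwards [sm_ae hσ] with x hx
      simp [hx]
    rw [integral_congr_ae this]
    simp
  rw [h2] at h1
  simp at h1
  have hd0 : (0 : ℝ) < d := by exact_mod_cast hd
  rw [hgen, eq_div_iff (by positivity)]
  linear_combination (-(∑ i, l i ^ 2 + (∑ i, l i) ^ 2)) * h1

/-- The second moment of the quadratic form `u*Θu` for `u` uniform on
the unit sphere of `ℂ^d`: `E[(u*Θu)²] = (tr(Θ²) + (tr Θ)²)/(d(d+1))`. -/
theorem second_moment_quadratic_form_uniform_sphere
    {d : ℕ} (hd : 1 ≤ d)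
    (σ : Measure (Fin d → ℂ)) (hσ : IsUniformSphereMeasure d σ)
    (Θ : Matrix (Fin d) (Fin d) ℂ) (hΘ : Θ.IsHermitian) :
    (∀ x : Fin d → ℂ, (star x ⬝ᵥ Θ.mulVec x).im = 0) ∧
    ∫ x, ((star x ⬝ᵥ Θ.mulVec x).re) ^ 2 ∂σ =
      ((Θ * Θ).trace.re + (Θ.trace.re) ^ 2) / (d * (d + 1)) := by
  have him : ∀ x : Fin d → ℂ, (star x ⬝ᵥ Θ.mulVec x).im = 0 := by
    intro x
    exact hΘ.im_star_dotProduct_mulVec_self x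
  refine ⟨him, ?_⟩
  set U : Matrix (Fin d) (Fin d) ℂ := hΘ.eigenvectorUnitary.1 with hU
  have hUm : U ∈ Matrix.unitaryGroup (Fin d) ℂ := hΘ.eigenvectorUnitary.2
  have hUU : Uᴴ * U = 1 := Matrix.mem_unitaryGroup_iff'.1 hUm
  set l := hΘ.eigenvalues with hl
  set D : Matrix (Fin d) (Fin d) ℂ := Matrix.diagonal (fun i => (l i : ℂ)) with hD
  have hspec : Θ = U * D * Uᴴ := by
    have := hΘ.spectral_theorem
    rw [Unitary.conjStarAlgAut_apply] at this
    exact this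
  have ht1 : Θ.trace = ((∑ i, l i : ℝ) : ℂ) := by
    rw [hspec, Matrix.trace_mul_comm, ← mul_assoc, hUU, one_mul, hD, Matrix.trace_diagonal]
    push_cast; rfl
  have ht2 : (Θ * Θ).trace = ((∑ i, l i ^ 2 : ℝ) : ℂ) := by
    have : Θ * Θ = U * (D * D) * Uᴴ := by
      rw [hspec]
      calc U * D * Uᴴ * (U * D * Uᴴ) = U * D * (Uᴴ * U) * D * Uᴴ := by simp only [mul_assoc]
        _ = _ := by rw [hUU, mul_one]; simp only [mul_assoc]
    rw [this, Matrix.trace_mul_comm, ← mul_assoc, hUU, one_mul, hD, Matrix.diagonal_mul_diagonal,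
      Matrix.trace_diagonal]
    push_cast
    exact Finset.sum_congr rfl fun i _ => by ring
  rw [ht1, ht2, Complex.ofReal_re, Complex.ofReal_re, ← sm_sum2 hσ hd l]
  rw [← sm_integral_comp hσ U hUm _ (by fun_prop)]
  congr 1
  ext x
  congr 1
  have : star (U.mulVec x) ⬝ᵥ Θ.mulVec (U.mulVec x) = star x ⬝ᵥ D.mulVec x := by
    rw [Matrix.star_mulVec, ← Matrix.dotProduct_mulVec, Matrix.mulVec_mulVec, Matrix.mulVec_mulVec]
    congr 2
    rw [hspec]
    calc Uᴴ * (U * D * Uᴴ) * U = (Uᴴ * U) * D * (Uᴴ * U) := by simp only [mul_assoc]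
      _ = D := by rw [hUU]; simp
  rw [this]
  simp only [dotProduct, hD, Matrix.mulVec_diagonal, Complex.re_sum, Pi.star_apply]
  refine Finset.sum_congr rfl fun i _ => ?_
  simp [Complex.normSq_apply]
  ring
end
end

section
/- Let ν be a Borel measure on ℝ∖{0} with ∫ min(1, r²) ν(dr) < ∞, and let ν_d be the pushforward of ν ⊗ σ_d under (r,u) ↦ r·uu*. Then for every ε > 0 and every d×d complex Hermitian matrix Θ, ∫_{‖ξ‖ ≤ ε} (tr(Θξ))² ν_d(dξ) = ( ∫_{|r| ≤ ε} r² ν(dr) ) · (tr(Θ²) + (tr(Θ))²) / (d(d+1)), where ‖·‖ is the Frobenius norm and tr(Θξ) is real for Hermitian Θ, ξ. -/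
open MeasureTheory Matrix
open scoped ComplexOrder

noncomputable section

/-- Frobenius norm of a complex matrix, ‖A‖ = (tr(AA*))^{1/2}. -/
def frobNorm {d q : ℕ} (A : Matrix (Fin d) (Fin q) ℂ) : ℝ :=
  Real.sqrt ((A * Aᴴ).trace.re)

lemma aux_sfinite (ν : Measure ℝ) (hν0 : ν {0} = 0)
    (hνint : ∫⁻ r, ENNReal.ofReal (min 1 (r ^ 2)) ∂ν < ⊤) : SFinite ν := by
  have hm : Measurable (fun r : ℝ => ENNReal.ofReal (min 1 (r ^ 2))) := by fun_prop
  have hfin : IsFiniteMeasure (ν.withDensity (fun r : ℝ => ENNReal.ofReal (min 1 (r ^ 2)))) :=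
    isFiniteMeasure_withDensity hνint.ne
  have hne : ∀ᵐ r ∂ν, ENNReal.ofReal (min 1 (r ^ 2)) ≠ 0 := by
    have h0 : ∀ᵐ r ∂ν, r ≠ 0 := by
      rw [ae_iff]; simpa using hν0
    filter_upwards [h0] with r hr
    have : 0 < min 1 (r ^ 2) := lt_min one_pos (by positivity)
    exact (ENNReal.ofReal_pos.mpr this).ne'
  exact sFinite_of_absolutelyContinuous
    (withDensity_absolutelyContinuous' hm.aemeasurable hne)

lemma outer_mulVec {d : ℕ} (A : Matrix (Fin d) (Fin d) ℂ) (x : Fin d → ℂ) :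
    outer (A *ᵥ x) (A *ᵥ x) = A * outer x x * Aᴴ := by
  unfold outer
  rw [Matrix.mul_vecMulVec, Matrix.vecMulVec_mul, Matrix.star_mulVec]

lemma trace_mul_outer {d : ℕ} (A : Matrix (Fin d) (Fin d) ℂ) (x : Fin d → ℂ) :
    (A * outer x x).trace = ∑ i, ∑ j, A i j * x j * star (x i) := by
  simp [Matrix.trace, Matrix.mul_apply, outer, Matrix.vecMulVec_apply, mul_assoc]

lemma trace_diag_outer {d : ℕ} (l : Fin d → ℝ) (x : Fin d → ℂ) :
    (diagonal (fun i => (l i : ℂ)) * outer x x).trace.re = ∑ i, l i * Complex.normSq (x i) := by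
  rw [trace_mul_outer]
  simp only [Matrix.diagonal_apply, ite_mul, zero_mul, Finset.sum_ite_eq, Finset.mem_univ, if_true,
    Complex.re_sum]
  refine Finset.sum_congr rfl fun i _ => ?_
  simp [Complex.normSq_apply]
  ring

lemma frob_outer {d : ℕ} (r : ℝ) (x : Fin d → ℂ) (hx : cnormSq x = 1) :
    frobNorm ((r : ℂ) • outer x x) = |r| := by
  have h1 : star x ⬝ᵥ x = 1 := by
    have : star x ⬝ᵥ x = ((cnormSq x : ℝ) : ℂ) := by
      simp [dotProduct, cnormSq, Complex.normSq_eq_conj_mul_self]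
    rw [this, hx]; simp
  have h2 : x ⬝ᵥ star x = 1 := by rw [dotProduct_comm]; exact h1
  unfold frobNorm outer
  rw [Matrix.conjTranspose_smul, Matrix.conjTranspose_vecMulVec, star_star, Matrix.smul_mul,
    Matrix.mul_smul, Matrix.vecMulVec_mul_vecMulVec, h1]
  simp [Matrix.trace_vecMulVec, h2, Real.sqrt_mul_self_eq_abs]

section

variable {d : ℕ} {σ : Measure (Fin d → ℂ)}

lemma normSq_le (x : Fin d → ℂ) (hx : cnormSq x = 1) (i : Fin d) : Complex.normSq (x i) ≤ 1 := by
  rw [← hx]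
  exact Finset.single_le_sum (f := fun i => Complex.normSq (x i))
    (fun i _ => Complex.normSq_nonneg _) (Finset.mem_univ i)

lemma ae_sphere (hσ : IsUniformSphereMeasure d σ) : ∀ᵐ x ∂σ, cnormSq x = 1 := by
  rw [ae_iff]; exact hσ.2.1

lemma meas_normSq (i : Fin d) : Measurable (fun x : Fin d → ℂ => Complex.normSq (x i)) := 
  Complex.continuous_normSq.measurable.comp (measurable_pi_apply i)

lemma integ (hσ : IsUniformSphereMeasure d σ) (i j : Fin d) :
    Integrable (fun x : Fin d → ℂ => Complex.normSq (x i) * Complex.normSq (x j)) σ := by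
  have := hσ.1
  refine Integrable.of_bound ((meas_normSq i).mul (meas_normSq j)).aestronglyMeasurable 1 ?_
  filter_upwards [ae_sphere hσ] with x hx
  have h1 := normSq_le x hx i
  have h2 := normSq_le x hx j
  have h3 := Complex.normSq_nonneg (x i)
  have h4 := Complex.normSq_nonneg (x j)
  rw [Real.norm_of_nonneg (by positivity)]
  nlinarith

def mom (σ : Measure (Fin d → ℂ)) (i j : Fin d) : ℝ :=
  ∫ x, Complex.normSq (x i) * Complex.normSq (x j) ∂σ

lemma mom_symm (i j : Fin d) : mom σ i j = mom σ j i := by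
  unfold mom; simp only [mul_comm]

lemma meas_mulVec (U : Matrix (Fin d) (Fin d) ℂ) : Measurable (fun x : Fin d → ℂ => U *ᵥ x) := by
  refine Continuous.measurable ?_
  fun_prop

lemma sph_integral_inv (hσ : IsUniformSphereMeasure d σ) (U : Matrix.unitaryGroup (Fin d) ℂ)
    (f : (Fin d → ℂ) → ℝ) (hf : Measurable f) :
    ∫ x, f ((U : Matrix (Fin d) (Fin d) ℂ) *ᵥ x) ∂σ = ∫ x, f x ∂σ := by
  conv_rhs => rw [← hσ.2.2 U]
  rw [integral_map (meas_mulVec _).aemeasurable hf.aestronglyMeasurable]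

lemma mom_perm (hσ : IsUniformSphereMeasure d σ) (p : Equiv.Perm (Fin d)) (i j : Fin d) :
    mom σ (p i) (p j) = mom σ i j := by
  have hU : p.permMatrix ℂ ∈ Matrix.unitaryGroup (Fin d) ℂ := by
    rw [Matrix.mem_unitaryGroup_iff, Matrix.star_eq_conjTranspose, Matrix.conjTranspose_permMatrix,
      ← Matrix.permMatrix_mul]
    simp
  have := sph_integral_inv hσ ⟨_, hU⟩ (fun x => Complex.normSq (x i) * Complex.normSq (x j))
    ((meas_normSq i).mul (meas_normSq j))
  simpa [Matrix.permMatrix_mulVec, mom] using this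

lemma second_moment_eig (hσ : IsUniformSphereMeasure d σ) (Θ : Matrix (Fin d) (Fin d) ℂ)
    (hΘ : Θ.IsHermitian) :
    ∫ x, ((Θ * outer x x).trace.re) ^ 2 ∂σ =
      ∑ i, ∑ j, hΘ.eigenvalues i * hΘ.eigenvalues j * mom σ i j := by
  set l := hΘ.eigenvalues with hl
  have key : ∀ x : Fin d → ℂ, (Θ * outer x x).trace.re =
      ∑ i, l i * Complex.normSq
        ((((star hΘ.eigenvectorUnitary : Matrix.unitaryGroup (Fin d) ℂ) :
          Matrix (Fin d) (Fin d) ℂ) *ᵥ x) i) := by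
    intro x
    rw [← trace_diag_outer, outer_mulVec]
    conv_lhs => rw [hΘ.spectral_theorem, Unitary.conjStarAlgAut_apply]
    rw [Matrix.trace_mul_comm, ← Matrix.mul_assoc, ← Matrix.mul_assoc, Matrix.trace_mul_comm]
    rw [← Matrix.star_eq_conjTranspose, Unitary.coe_star, star_star]
    rw [Matrix.trace_mul_comm, Matrix.trace_mul_comm (diagonal _)]
    rw [Matrix.trace_mul_comm, ← Matrix.mul_assoc, ← Matrix.mul_assoc]
    rfl
  simp only [key]
  rw [sph_integral_inv hσ (star hΘ.eigenvectorUnitary)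
    (fun x => (∑ i, l i * Complex.normSq (x i)) ^ 2)
    ((Finset.measurable_sum _ fun i _ => (meas_normSq i).const_mul _).pow_const 2)]
  have : ∀ x : Fin d → ℂ, (∑ i, l i * Complex.normSq (x i)) ^ 2 =
      ∑ i, ∑ j, l i * l j * (Complex.normSq (x i) * Complex.normSq (x j)) := by
    intro x
    rw [sq, Finset.sum_mul_sum]
    refine Finset.sum_congr rfl fun i _ => Finset.sum_congr rfl fun j _ => ?_
    ring
  simp only [this]
  rw [integral_finset_sum _ fun i _ => integrable_finset_sum _ fun j _ =>
    (integ hσ i j).const_mul _]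
  refine Finset.sum_congr rfl fun i _ => ?_
  rw [integral_finset_sum _ fun j _ => (integ hσ i j).const_mul _]
  refine Finset.sum_congr rfl fun j _ => ?_
  rw [integral_const_mul]; rfl

lemma trace_eig (Θ : Matrix (Fin d) (Fin d) ℂ) (hΘ : Θ.IsHermitian) :
    Θ.trace.re = ∑ i, hΘ.eigenvalues i := by
  rw [hΘ.trace_eq_sum_eigenvalues]; simp

lemma trace_sq_eig (Θ : Matrix (Fin d) (Fin d) ℂ) (hΘ : Θ.IsHermitian) :
    (Θ * Θ).trace.re = ∑ i, hΘ.eigenvalues i ^ 2 := by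
  have h := hΘ.spectral_theorem
  have : Θ * Θ = Unitary.conjStarAlgAut ℂ _ hΘ.eigenvectorUnitary
      (diagonal (RCLike.ofReal ∘ hΘ.eigenvalues) * diagonal (RCLike.ofReal ∘ hΘ.eigenvalues)) := by
    rw [map_mul, ← h]
  rw [this, Unitary.conjStarAlgAut_apply, Matrix.trace_mul_comm, ← Matrix.mul_assoc]
  simp [sq]

lemma mom_struct (hσ : IsUniformSphereMeasure d σ) :
    ∃ a b : ℝ, (∀ i, mom σ i i = a) ∧ ∀ i j, i ≠ j → mom σ i j = b := by
  have A : ∀ i j, mom σ i i = mom σ j j := by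
    intro i j
    have := mom_perm hσ (Equiv.swap i j) j j
    simpa using this
  have B : ∀ i j k, j ≠ i → k ≠ i → mom σ i j = mom σ i k := by
    intro i j k h1 h2
    have := mom_perm hσ (Equiv.swap j k) i k
    rw [Equiv.swap_apply_of_ne_of_ne h1.symm h2.symm] at this
    simpa using this
  have C : ∀ i j k l, i ≠ j → k ≠ l → mom σ i j = mom σ k l := by
    intro i j k l h1 h2
    by_cases h : i = l
    · subst h
      rw [B i j k h1.symm h2, mom_symm]
    · rw [B i j l h1.symm (Ne.symm h), mom_symm, B l i k h h2, mom_symm]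
  by_cases h : ∃ p : Fin d × Fin d, p.1 ≠ p.2
  · obtain ⟨⟨i, j⟩, hij⟩ := h
    exact ⟨mom σ i i, mom σ i j, fun k => A _ _, fun k l hkl => C _ _ _ _ hkl hij⟩
  · push Not at h
    by_cases hn : Nonempty (Fin d)
    · obtain ⟨i⟩ := hn
      exact ⟨mom σ i i, 0, fun k => A _ _, fun k l hkl => absurd (h (k, l)) hkl⟩
    · exact ⟨0, 0, fun k => absurd ⟨k⟩ hn, fun k => absurd ⟨k⟩ hn⟩

lemma second_moment_ab (hσ : IsUniformSphereMeasure d σ) (a b : ℝ) (ha : ∀ i, mom σ i i = a)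
    (hb : ∀ i j, i ≠ j → mom σ i j = b) (Θ : Matrix (Fin d) (Fin d) ℂ)
    (hΘ : Θ.IsHermitian) :
    ∫ x, ((Θ * outer x x).trace.re) ^ 2 ∂σ = b * Θ.trace.re ^ 2 + (a - b) * (Θ * Θ).trace.re := by
  rw [second_moment_eig hσ Θ hΘ, trace_eig Θ hΘ, trace_sq_eig Θ hΘ]
  have : ∀ i j, mom σ i j = b + if i = j then (a - b) else 0 := by
    intro i j
    split_ifs with h
    · subst h; rw [ha]; ring
    · rw [hb i j h]; ring
  simp only [this, mul_add, Finset.sum_add_distrib, mul_ite, mul_zero, Finset.sum_ite_eq,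
    Finset.mem_univ, if_true]
  rw [sq, Finset.sum_mul_sum, Finset.mul_sum, Finset.mul_sum]
  congr 1
  · refine Finset.sum_congr rfl fun i _ => ?_
    rw [Finset.mul_sum]
    exact Finset.sum_congr rfl fun j _ => by ring
  · exact Finset.sum_congr rfl fun j _ => by ring

lemma rel_norm (hσ : IsUniformSphereMeasure d σ) (a b : ℝ) (ha : ∀ i, mom σ i i = a)
    (hb : ∀ i j, i ≠ j → mom σ i j = b) : b * (d : ℝ) ^ 2 + (a - b) * d = 1 := by
  have := hσ.1
  have h := second_moment_ab hσ a b ha hb 1 Matrix.isHermitian_one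
  have h2 : ∫ x, (((1 : Matrix (Fin d) (Fin d) ℂ) * outer x x).trace.re) ^ 2 ∂σ = 1 := by
    have : (fun x : Fin d → ℂ => (((1 : Matrix (Fin d) (Fin d) ℂ) * outer x x).trace.re) ^ 2)
        =ᵐ[σ] fun _ => 1 := by
      filter_upwards [ae_sphere hσ] with x hx
      have := trace_diag_outer (fun _ => 1) x
      simp only [Complex.ofReal_one, Matrix.diagonal_one, one_mul] at this
      rw [one_mul, this]
      change (cnormSq x) ^ 2 = 1
      rw [hx]; norm_num
    rw [integral_congr_ae this]; simp
  rw [h2] at h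
  simp at h
  linarith

lemma rel_two (hσ : IsUniformSphereMeasure d σ) (a b : ℝ) (ha : ∀ i, mom σ i i = a)
    (hb : ∀ i j, i ≠ j → mom σ i j = b) (i j : Fin d) (hij : i ≠ j) : a = 2 * b := by
  have := hσ.1
  set S : Matrix (Fin d) (Fin d) ℂ := Matrix.single i j 1 + Matrix.single j i 1 with hS
  set T : Matrix (Fin d) (Fin d) ℂ :=
    Matrix.single i j Complex.I + Matrix.single j i (-Complex.I) with hT
  have hSh : S.IsHermitian := by
    simp [Matrix.IsHermitian, hS, Matrix.conjTranspose_single, add_comm]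
  have hTh : T.IsHermitian := by
    simp [Matrix.IsHermitian, hT, Matrix.conjTranspose_single, add_comm]
  have h1 := second_moment_ab hσ a b ha hb S hSh
  have h2 := second_moment_ab hσ a b ha hb T hTh
  have tS : S.trace = 0 := by simp [hS, Matrix.trace_single_eq_of_ne, hij, hij.symm]
  have tT : T.trace = 0 := by simp [hT, Matrix.trace_single_eq_of_ne, hij, hij.symm]
  have tSS : (S * S).trace.re = 2 := by
    simp [hS, mul_add, add_mul, Matrix.single_mul_single_of_ne, hij, hij.symm]; norm_num
  have tTT : (T * T).trace.re = 2 := by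
    simp [hT, mul_add, add_mul, Matrix.single_mul_single_of_ne, hij, hij.symm]; norm_num
  have eS : ∀ x : Fin d → ℂ, (S * outer x x).trace.re = 2 * (x j * star (x i)).re := by
    intro x
    simp [hS, add_mul, Matrix.trace_single_mul, outer, Matrix.vecMulVec_apply]
    ring
  have eT : ∀ x : Fin d → ℂ, (T * outer x x).trace.re = - 2 * (x j * star (x i)).im := by
    intro x
    simp [hT, add_mul, Matrix.trace_single_mul, outer, Matrix.vecMulVec_apply]
    ring
  have hz : ∀ x : Fin d → ℂ, (x j * star (x i)).re ^ 2 + (x j * star (x i)).im ^ 2 =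
      Complex.normSq (x i) * Complex.normSq (x j) := by
    intro x
    simp [Complex.normSq_apply]
    ring
  have iS : Integrable (fun x => ((S * outer x x).trace.re) ^ 2) σ := by
    refine Integrable.mono' ((integ hσ i j).const_mul 4) ?_ ?_
    · simp only [eS]
      exact Continuous.aestronglyMeasurable (by fun_prop)
    · refine Filter.Eventually.of_forall fun x => ?_
      rw [eS, Real.norm_of_nonneg (by positivity), ← hz]
      nlinarith [sq_nonneg (x j * star (x i)).im]
  have iT : Integrable (fun x => ((T * outer x x).trace.re) ^ 2) σ := by
    refine Integrable.mono' ((integ hσ i j).const_mul 4) ?_ ?_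
    · simp only [eT]
      exact Continuous.aestronglyMeasurable (by fun_prop)
    · refine Filter.Eventually.of_forall fun x => ?_
      rw [eT, Real.norm_of_nonneg (by positivity), ← hz]
      nlinarith [sq_nonneg (x j * star (x i)).re]
  have hsum : ∫ x, (((S * outer x x).trace.re) ^ 2 + ((T * outer x x).trace.re) ^ 2) ∂σ
      = 4 * b := by
    rw [← hb i j hij, mom, ← integral_const_mul]
    congr 1
    funext x
    rw [eS, eT, ← hz]; ring
  rw [integral_add iS iT, h1, h2, tS, tT, tSS, tTT] at hsum
  simp at hsum
  linarith

lemma second_moment (hd : 1 ≤ d) (hσ : IsUniformSphereMeasure d σ)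
    (Θ : Matrix (Fin d) (Fin d) ℂ) (hΘ : Θ.IsHermitian) :
    ∫ x, ((Θ * outer x x).trace.re) ^ 2 ∂σ =
      ((Θ * Θ).trace.re + (Θ.trace.re) ^ 2) / (d * (d + 1)) := by
  obtain ⟨a, b0, ha, hb0⟩ := mom_struct hσ
  obtain ⟨b, hb, hab⟩ : ∃ b, (∀ i j, i ≠ j → mom σ i j = b) ∧ a = 2 * b := by
    by_cases h : ∃ p : Fin d × Fin d, p.1 ≠ p.2
    · obtain ⟨⟨i, j⟩, hij⟩ := h
      exact ⟨b0, hb0, rel_two hσ a b0 ha hb0 i j hij⟩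
    · push Not at h
      exact ⟨a / 2, fun i j hij => absurd (h (i, j)) hij, by ring⟩
  rw [second_moment_ab hσ a b ha hb Θ hΘ]
  have h := rel_norm hσ a b ha hb
  have hd' : (0 : ℝ) < d := by exact_mod_cast hd
  rw [eq_div_iff (by positivity)]
  subst hab
  linear_combination ((Θ * Θ).trace.re + (Θ.trace.re) ^ 2) * h

end

/-- Truncated second moment of `tr(Θξ)` under the pushforward measure
`ν_d`: `∫_{‖ξ‖≤ε} (tr(Θξ))² ν_d(dξ) = (∫_{|r|≤ε} r² ν(dr)) (tr(Θ²)+(tr Θ)²)/(d(d+1))`. -/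
theorem truncated_second_moment_pushforward
    {d : ℕ} (hd : 1 ≤ d)
    (ν : Measure ℝ) (hν0 : ν {0} = 0)
    (hνint : ∫⁻ r, ENNReal.ofReal (min 1 (r ^ 2)) ∂ν < ⊤)
    (σ : Measure (Fin d → ℂ)) (hσ : IsUniformSphereMeasure d σ)
    (νd : Measure (Matrix (Fin d) (Fin d) ℂ))
    (hνd : νd = (ν.prod σ).map (fun p => ((p.1 : ℝ) : ℂ) • outer p.2 p.2)) :
    ∀ ε > (0 : ℝ), ∀ (Θ : Matrix (Fin d) (Fin d) ℂ), Θ.IsHermitian →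
      ∫ ξ in {ξ : Matrix (Fin d) (Fin d) ℂ | frobNorm ξ ≤ ε},
          ((Θ * ξ).trace.re) ^ 2 ∂νd =
        (∫ r in {r : ℝ | |r| ≤ ε}, r ^ 2 ∂ν) *
          (((Θ * Θ).trace.re + (Θ.trace.re) ^ 2) / (d * (d + 1))) := by
  intro ε hε Θ hΘ
  have := hσ.1
  have := aux_sfinite ν hν0 hνint
  have hent : ∀ i j, Measurable (fun ξ : Matrix (Fin d) (Fin d) ℂ => ξ i j) := fun i j =>
    (measurable_pi_apply (X := fun _ : Fin d => ℂ) j).comp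
      (measurable_pi_apply (X := fun _ : Fin d => Fin d → ℂ) i)
  have hmap : Measurable (fun p : ℝ × (Fin d → ℂ) => ((p.1 : ℝ) : ℂ) • outer p.2 p.2) := by
    refine measurable_pi_lambda _ fun i => measurable_pi_lambda _ fun j => ?_
    refine Continuous.measurable ?_
    simp only [Matrix.smul_apply, outer, Matrix.vecMulVec_apply]
    simp only [Pi.star_apply]
    fun_prop
  have hset : MeasurableSet {ξ : Matrix (Fin d) (Fin d) ℂ | frobNorm ξ ≤ ε} := by
    refine measurableSet_le ?_ measurable_const
    unfold frobNorm
    simp only [Matrix.trace, Matrix.mul_apply, Matrix.diag, Matrix.conjTranspose_apply]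
    refine Real.continuous_sqrt.measurable.comp (Complex.measurable_re.comp ?_)
    refine Finset.measurable_sum _ fun i _ => Finset.measurable_sum _ fun j _ => ?_
    exact (hent i j).mul (continuous_star.measurable.comp (hent i j))
  have hint : Measurable (fun ξ : Matrix (Fin d) (Fin d) ℂ => ((Θ * ξ).trace.re) ^ 2) := by
    simp only [Matrix.trace, Matrix.mul_apply, Matrix.diag]
    refine (Complex.measurable_re.comp ?_).pow_const 2
    exact Finset.measurable_sum _ fun i _ => Finset.measurable_sum _ fun j _ =>
      (hent j i).const_mul _
  rw [hνd, setIntegral_map hset hint.aestronglyMeasurable hmap.aemeasurable,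
    ← integral_indicator (hmap hset), ← second_moment hd hσ Θ hΘ,
    ← integral_indicator (measurableSet_le (by fun_prop) measurable_const), ← integral_prod_mul]
  refine integral_congr_ae ?_
  have hae : ∀ᵐ p ∂(ν.prod σ), cnormSq p.2 = 1 :=
    Measure.quasiMeasurePreserving_snd.ae (ae_sphere hσ)
  filter_upwards [hae] with p hp
  have hfr := frob_outer p.1 p.2 hp
  simp only [Set.indicator, Set.mem_preimage, Set.mem_setOf_eq, hfr]
  split_ifs with h
  · rw [Matrix.mul_smul, Matrix.trace_smul, smul_eq_mul, Complex.re_ofReal_mul]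
    ring
  · simp
end
end
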